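/- arXiv:0807.1353 — 2 statements merged into one kernel-verified Lean document; each statement's English description precedes it below -/
import Mathlib

section
/- Let {B_n}_{n≥0} be a sequence of monic polynomials with deg B_n = n and dual sequence {u_n}. Let t̂, σ̂, r̂ be natural numbers with r̂ ≥ σ̂ + t̂ + 1, and let {Ω_n}_{n≥0} be a sequence of monic polynomials with deg Ω_n = n and dual sequence {w_n} such that Ω_n = Σ_{ν=n−t̂}^{n} λ_{n,ν} B_ν for all n ≥ t̂ + σ̂ + 1 with λ_{r̂, r̂−t̂} ≠ 0, and Ω_n = B_n for 0 ≤ n ≤ t̂ + σ̂. Then w_k = u_k for every 0 ≤ k ≤ σ̂. -/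
/-! The sequence `Ω` spans `ℂ[X]`, so it suffices to check that `du k` has the same values on every
`Ω n` as `w k`, namely `δ_{k,n}`. For `n ≤ t + σ` this is biorthogonality to `B`, since `Ω n = B n`.
For `n ≥ t + σ + 1` the expansion of `Ω n` involves only `B ν` with `ν ≥ n - t ≥ σ + 1 > k`, on all of
which `du k` vanishes. -/

open Polynomial Finset

/-- Lemma 2.2: if a monic polynomial sequence Ω agrees with B up to index t̂+σ̂ and
each Ω_n (n ≥ t̂+σ̂+1) expands in B_{n-t̂},…,B_n with λ_{r̂,r̂−t̂} ≠ 0,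
then the dual sequences agree up to index σ̂. -/
theorem statement1
    (B : ℕ → ℂ[X]) (hBmonic : ∀ n, (B n).Monic) (hBdeg : ∀ n, (B n).natDegree = n)
    (du : ℕ → (ℂ[X] →ₗ[ℂ] ℂ)) (hdu : ∀ n m, du n (B m) = if n = m then 1 else 0)
    (t σ r : ℕ) (hr : σ + t + 1 ≤ r)
    (Ω : ℕ → ℂ[X]) (hΩmonic : ∀ n, (Ω n).Monic) (hΩdeg : ∀ n, (Ω n).natDegree = n)
    (w : ℕ → (ℂ[X] →ₗ[ℂ] ℂ)) (hw : ∀ n m, w n (Ω m) = if n = m then 1 else 0)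
    (lam : ℕ → ℕ → ℂ)
    (hexp : ∀ n, t + σ + 1 ≤ n → Ω n = ∑ ν ∈ Finset.Icc (n - t) n, lam n ν • B ν)
    (hlamr : lam r (r - t) ≠ 0)
    (hlow : ∀ n, n ≤ t + σ → Ω n = B n) :
    ∀ k, k ≤ σ → w k = du k := by
  intro k hk
  let S : Polynomial.Sequence ℂ :=
    ⟨Ω, fun n => by rw [degree_eq_natDegree (hΩmonic n).ne_zero, hΩdeg]⟩
  have hspan : Submodule.span ℂ (Set.range Ω) = ⊤ :=
    S.span fun n => by
      change IsUnit (Ω n).leadingCoeff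
      rw [(hΩmonic n).leadingCoeff]
      exact isUnit_one
  refine LinearMap.ext_on_range hspan fun n => ?_
  rw [hw]
  rcases Nat.lt_or_ge (t + σ) n with hn | hn
  · rw [hexp n hn, map_sum, if_neg (by omega)]
    refine (Finset.sum_eq_zero fun ν hν => ?_).symm
    have hν' := (Finset.mem_Icc.mp hν).1
    rw [map_smul, hdu, if_neg (by omega), smul_zero]
  · rw [hlow n hn, hdu]
end

section
/- Second characterization of discrete ( Δ-) semiclassical polynomials. Let Φ be a monic polynomial of degree t and {B_n}_{n≥0} the SMOP of a quasi-definite functional u. The following are equivalent: (i) there exist a non-negative integer σ, an integer p ≥ 1, and an integer r ≥ σ+t+1, with σ = max(t−2, p−1), such that Σ_{ν=n−σ}^{n+σ} ξ_{n,ν} B_ν = Σ_{ν=n−t}^{n+σ} ς_{n,ν} B_ν^{[1]} for all n ≥ max(σ, t+1), where B_n^{[1]} := (n+1)⁻¹ΔB_{n+1}, ξ_{n,n+σ} = ς_{n,n+σ} = 1, and ξ_{r,r−σ}·ς_{r,r−t} ≠ 0; moreover ⟨Δ(Φu), B_m⟩ = 0 for p+1 ≤ m ≤ 2σ+t+1,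 ⟨Δ(Φu), B_p⟩ ≠ 0, and if p = t−1 then ⟨u,B_p²⟩⁻¹·⟨u, Φ·ΔB_p⟩ ≠ m for every integer m ≥ 1; (ii) there exists a polynomial Ψ with deg Ψ = p ≥ 1 such that Δ(Φu) = Ψu and the pair (Φ,Ψ) is admissible. -/
/-!
Throughout, the Pearson equation `Δ(Φu) = Ψu` reads `-u(Φ Δf) = u(Ψ f)`, and `taylor c f` is the
shifted polynomial `f(x + c)`.

From the relations to the Pearson equation (`forward`): let `Ψ` be the combination of
`B 0, …, B p` matching `Δ(Φu)` on these polynomials. Multiplying the relation of index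
`n = m - σ - 1` by `Φ` and applying `u` kills the left-hand side by orthogonality, so `Δ(Φu)`
vanishes on `B m` as soon as it agrees with `Ψu` on the earlier `B k`; strong induction concludes.

From the Pearson equation to the relations: it suffices to find, for each `n`, a monic `F` of degree
`n + σ + 1` with `F` orthogonal to all polynomials of degree `≤ n - t` and `ΔF` orthogonal to all
polynomials of degree `< n - σ`. Then `ΔF / (n + σ + 1)` is the common value of the two sides
(`relation_of_poly`). By finite-dimensional duality (`exists_wFun_of_ker`), if no such `F` existed,
the coefficient of `x^(n + σ + 1)` would be given in degrees `≤ n + σ + 1` by some `v = a u - Δ(b u)`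
with `deg a ≤ n - t` and `deg b < n - σ`. The key lemma `wFun_eq_zero` excludes this: such a `v`
killing all polynomials of degree `≤ n + σ` is zero. Indeed there is a polynomial `Q` of degree at
most `n` with `v(Φ(x-1) f) = u(Q f)` and `v((Φ - Ψ) f) = u((Q f)(x + 1))`; subtracting, `ΔQ` is
orthogonal to everything of degree `< n`, so `Q` is constant, then zero, and so is `v`.

The same duality, with the functional `f ↦ u(B (n + 1 - t) f)`, shows that `F` can be chosen with a
nonzero component along `B (n + 1 - t)`, which is the lowest coefficient on the right
(`exists_relation_poly`). The lowest coefficient on the left is then nonzero by the Leibniz rule and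
admissibility (`low_coeff_ne_zero`), so that `r = σ + t + 1` works.
-/

open Polynomial Finset

/-- Forward difference operator on polynomials: (Δf)(x) = f(x+1) − f(x). -/
noncomputable def Δd (f : ℂ[X]) : ℂ[X] := f.comp (X + C 1) - f

/-- B_n^{[1]} := (n+1)⁻¹ Δ B_{n+1}. -/
noncomputable def B1d (B : ℕ → ℂ[X]) (n : ℕ) : ℂ[X] :=
  C ((n : ℂ) + 1)⁻¹ * Δd (B (n + 1))

def IsSMOP (u : ℂ[X] →ₗ[ℂ] ℂ) (B : ℕ → ℂ[X]) : Prop :=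
  (∀ n, (B n).Monic) ∧ (∀ n, (B n).natDegree = n) ∧
  (∀ n m, n ≠ m → u (B n * B m) = 0) ∧ (∀ n, u (B n ^ 2) ≠ 0)

def AdmissibleD (Φ Ψ : ℂ[X]) (t p : ℕ) : Prop :=
  Φ.Monic ∧ Φ.natDegree = t ∧ Ψ.natDegree = p ∧ 1 ≤ p ∧
  (p + 1 = t → ∀ m : ℕ, 1 ≤ m → Ψ.leadingCoeff ≠ -(m : ℂ))

/-! ### The forward difference operator -/

theorem Δd_eq (f : ℂ[X]) : Δd f = taylor 1 f - f := by
  simp [Δd, taylor_apply]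

theorem Δd_add (f g : ℂ[X]) : Δd (f + g) = Δd f + Δd g := by
  simp only [Δd_eq, map_add]; ring

theorem Δd_smul (c : ℂ) (f : ℂ[X]) : Δd (c • f) = c • Δd f := by
  simp only [Δd_eq, map_smul, smul_sub]

theorem Δd_sum {ι : Type*} (s : Finset ι) (f : ι → ℂ[X]) :
    Δd (∑ i ∈ s, f i) = ∑ i ∈ s, Δd (f i) := by
  simp only [Δd_eq, map_sum, Finset.sum_sub_distrib]

theorem Δd_mul (f g : ℂ[X]) : Δd (f * g) = Δd f * taylor 1 g + f * Δd g := by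
  simp only [Δd_eq, taylor_mul]; ring

theorem taylor_back (f : ℂ[X]) : taylor 1 (taylor (-1) f) = f := by
  simp [taylor_taylor]

theorem coeff_Δd {f : ℂ[X]} {d : ℕ} (hf : f.natDegree ≤ d + 1) :
    (Δd f).coeff d = ((d : ℂ) + 1) * f.coeff (d + 1) := by
  have h1 : (hasseDeriv d f).natDegree ≤ 1 :=
    (natDegree_hasseDeriv_le f d).trans (by omega)
  rw [Δd_eq, coeff_sub, taylor_coeff, eq_X_add_C_of_natDegree_le_one h1]
  simp only [hasseDeriv_coeff]
  simp [add_comm 1 d]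

theorem Δd_eq_zero {f : ℂ[X]} (hf : f.natDegree ≤ 0) : Δd f = 0 := by
  rw [eq_C_of_natDegree_le_zero hf, Δd_eq]
  simp

theorem natDegree_Δd_le {f : ℂ[X]} {d : ℕ} (hf : f.natDegree ≤ d + 1) :
    (Δd f).natDegree ≤ d := by
  rw [natDegree_le_iff_coeff_eq_zero]
  intro N hN
  have h := coeff_Δd (f := f) (d := N) (hf.trans (by omega))
  rw [h, coeff_eq_zero_of_natDegree_lt (by omega), mul_zero]

theorem natDegree_Δd_le' {f : ℂ[X]} {d : ℕ} (hf : f.natDegree ≤ d) :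
    (Δd f).natDegree ≤ d - 1 := by
  rcases d with _ | d
  · simp [Δd_eq_zero hf]
  · exact natDegree_Δd_le hf

/-- Only constants have vanishing difference. -/
theorem natDegree_eq_zero_of_Δd {f : ℂ[X]} (h : Δd f = 0) : f.natDegree = 0 := by
  by_contra hd
  obtain ⟨d, hd'⟩ := Nat.exists_eq_succ_of_ne_zero hd
  have h1 := coeff_Δd (f := f) (d := d) hd'.le
  rw [h, coeff_zero] at h1
  have h2 : f.coeff (d + 1) ≠ 0 := by
    rw [← Nat.succ_eq_add_one, ← hd', coeff_natDegree, Ne, leadingCoeff_eq_zero]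
    rintro rfl
    simp at hd
  have h3 : (d : ℂ) + 1 ≠ 0 := by exact_mod_cast Nat.succ_ne_zero d
  exact (mul_ne_zero h3 h2) h1.symm

/-! ### Orthogonality -/

section Orthogonality

variable {u : ℂ[X] →ₗ[ℂ] ℂ} {B : ℕ → ℂ[X]}

theorem IsSMOP.coeff_self (hu : IsSMOP u B) (n : ℕ) : (B n).coeff n = 1 := by
  have h := hu.1 n
  rw [Monic, leadingCoeff, hu.2.1 n] at h
  exact h

theorem degree_sub_lead (hu : IsSMOP u B) {g : ℂ[X]} {k : ℕ} (hg : g.degree < (k + 1 : ℕ)) :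
    (g - g.coeff k • B k).degree < k := by
  rw [degree_lt_iff_coeff_zero] at hg ⊢
  intro m hm
  rcases Nat.eq_or_lt_of_le hm with rfl | hm
  · simp [hu.coeff_self]
  · rw [coeff_sub, hg m hm, coeff_smul,
      coeff_eq_zero_of_natDegree_lt ((hu.2.1 k).trans_lt hm)]
    simp

theorem orth_of_degree_lt (hu : IsSMOP u B) {m : ℕ} :
    ∀ (k : ℕ), k ≤ m → ∀ g : ℂ[X], g.degree < k → u (B m * g) = 0 := by
  intro k
  induction k with
  | zero =>
    intro _ g hg
    have : g = 0 := by
      rw [← degree_eq_bot]; exact Nat.WithBot.lt_zero_iff.mp (by simpa using hg)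
    simp [this]
  | succ k ih =>
    intro hk g hg
    have h1 := ih (by omega) _ (degree_sub_lead hu hg)
    rw [mul_sub, map_sub, mul_smul_comm, map_smul, hu.2.2.1 m k (by omega)] at h1
    simpa using h1

theorem pair_coeff (hu : IsSMOP u B) {m : ℕ} {g : ℂ[X]} (hg : g.natDegree ≤ m) :
    u (B m * g) = g.coeff m * u (B m ^ 2) := by
  have h1 := orth_of_degree_lt hu m le_rfl _
    (degree_sub_lead hu (g := g) (k := m) (degree_le_natDegree.trans_lt (by exact_mod_cast (by omega))))
  rw [mul_sub, map_sub, mul_smul_comm, map_smul, ← pow_two, sub_eq_zero] at h1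
  simpa using h1

theorem orth_of_natDegree_lt (hu : IsSMOP u B) {m : ℕ} {g : ℂ[X]} (hg : g.natDegree < m) :
    u (B m * g) = 0 := by
  rw [pair_coeff hu hg.le, coeff_eq_zero_of_natDegree_lt hg, zero_mul]

/-- Quasi-definiteness: a polynomial orthogonal to every `B k` up to its own degree vanishes. -/
theorem eq_zero_of_orth (hu : IsSMOP u B) {q : ℂ[X]}
    (h : ∀ k ≤ q.natDegree, u (B k * q) = 0) : q = 0 := by
  have h1 := h _ le_rfl
  rw [pair_coeff hu le_rfl, coeff_natDegree] at h1
  exact leadingCoeff_eq_zero.mp ((mul_eq_zero.mp h1).resolve_right (hu.2.2.2 _))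

theorem pair_sum (hu : IsSMOP u B) (s : Finset ℕ) (c : ℕ → ℂ) (k : ℕ) :
    u (B k * ∑ i ∈ s, c i • B i) = if k ∈ s then c k * u (B k ^ 2) else 0 := by
  rw [Finset.mul_sum, map_sum]
  have : ∀ i ∈ s, u (B k * c i • B i) = if k = i then c k * u (B k ^ 2) else 0 := by
    intro i _
    rw [mul_smul_comm, map_smul]
    split_ifs with h
    · subst h; rw [pow_two, smul_eq_mul]
    · rw [hu.2.2.1 k i h, smul_zero]
  rw [Finset.sum_congr rfl this, Finset.sum_ite_eq]

theorem natDegree_sum_le' (hu : IsSMOP u B) (s : Finset ℕ) (c : ℕ → ℂ) {N : ℕ}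
    (hs : ∀ i ∈ s, i ≤ N) : (∑ i ∈ s, c i • B i).natDegree ≤ N :=
  natDegree_sum_le_of_forall_le _ _ fun i hi =>
    (natDegree_smul_le _ _).trans ((hu.2.1 i).le.trans (hs i hi))

theorem expand (hu : IsSMOP u B) {g : ℂ[X]} {N : ℕ} (hg : g.natDegree ≤ N) :
    g = ∑ k ∈ Finset.range (N + 1), (u (B k * g) / u (B k ^ 2)) • B k := by
  rw [← sub_eq_zero]
  apply eq_zero_of_orth hu
  intro k hk
  have hN : k ≤ N := hk.trans (natDegree_sub_le_of_le hg
    (natDegree_sum_le' hu _ _ fun i hi => by simp at hi; omega) |>.trans (by simp))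
  rw [mul_sub, map_sub, pair_sum hu, if_pos (by simp; omega), div_mul_cancel₀ _ (hu.2.2.2 k),
    sub_self]

end Orthogonality

/-! ### Functionals `a u - Δ(b u)` for semiclassical `u` -/

section Semiclassical

variable {u : ℂ[X] →ₗ[ℂ] ℂ} {B : ℕ → ℂ[X]} {Φ Ψ : ℂ[X]}

/-- Shift form of `Δ(Φu) = Ψu`. -/
theorem pearson_shift (hR : ∀ f, -u (Φ * Δd f) = u (Ψ * f)) (h : ℂ[X]) :
    u (Φ * taylor 1 h) = u ((Φ - Ψ) * h) := by
  have h1 := hR h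
  rw [Δd_eq, mul_sub, map_sub] at h1
  rw [sub_mul, map_sub, ← h1]
  ring

/-- The functional `a u - Δ(b u)`. -/
noncomputable def wFun (u : ℂ[X] →ₗ[ℂ] ℂ) (a b f : ℂ[X]) : ℂ := u (a * f + b * Δd f)

/-- The density `Q` in `Φ(x-1) (a u - Δ(b u)) = Q u`. -/
noncomputable def wQ (Φ Ψ a b : ℂ[X]) : ℂ[X] :=
  (a - b) * taylor (-1) Φ + taylor (-1) b * (Φ - Ψ)

/-- `Φ(x-1) (a u - Δ(b u)) = Q u`. -/
theorem wFun_phi (hR : ∀ f, -u (Φ * Δd f) = u (Ψ * f)) (a b f : ℂ[X]) :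
    wFun u a b (taylor (-1) Φ * f) = u (wQ Φ Ψ a b * f) := by
  have h := pearson_shift hR (taylor (-1) b * f)
  rw [taylor_mul, taylor_back] at h
  have e1 : a * (taylor (-1) Φ * f) + b * Δd (taylor (-1) Φ * f)
      = (a - b) * taylor (-1) Φ * f + Φ * (b * taylor 1 f) := by
    rw [Δd_eq, taylor_mul, taylor_back]; ring
  rw [wFun, e1, map_add, h, ← map_add, wQ]
  congr 1; ring

/-- Multiplying `a u - Δ(b u)` by `Φ - Ψ` instead of `Φ(x-1)` gives the same density `Q`, up to a
unit shift of the argument. -/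
theorem wFun_theta (hR : ∀ f, -u (Φ * Δd f) = u (Ψ * f)) (a b f : ℂ[X]) :
    wFun u a b ((Φ - Ψ) * f) = u (taylor 1 (wQ Φ Ψ a b * f)) := by
  have h := pearson_shift hR ((a - b) * f)
  have e1 : taylor 1 (wQ Φ Ψ a b * f) =
      Φ * taylor 1 ((a - b) * f) + b * taylor 1 ((Φ - Ψ) * f) := by
    rw [wQ]; simp only [taylor_mul, map_add, taylor_back]; ring
  rw [e1, map_add, h, ← map_add, wFun, Δd_eq]
  congr 1; ring

theorem natDegree_mul_le_of_degree_lt {b q : ℂ[X]} {k m N : ℕ} (hb : b.degree < k)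
    (hq : q.natDegree ≤ m) (h : 1 ≤ k → k - 1 + m ≤ N) : (b * q).natDegree ≤ N := by
  by_cases hb0 : b = 0
  · simp [hb0]
  · have := (natDegree_lt_iff_degree_lt hb0).mpr hb
    exact natDegree_mul_le.trans ((by omega : _ ≤ k - 1 + m).trans (h (by omega)))

theorem natDegree_nabla_le {Φ : ℂ[X]} {d : ℕ} (h : Φ.natDegree ≤ d) :
    (Φ - taylor (-1) Φ).natDegree ≤ d - 1 := by
  have : Φ - taylor (-1) Φ = Δd (taylor (-1) Φ) := by rw [Δd_eq, taylor_back]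
  rw [this]
  exact natDegree_Δd_le' (by rwa [natDegree_taylor])

/-- A form of `wQ` in which the leading cancellations are explicit: each term has the degree needed
for `natDegree_wQ_le`. -/
theorem wQ_eq (Φ Ψ a b : ℂ[X]) : wQ Φ Ψ a b = a * taylor (-1) Φ
    - (b - taylor (-1) b) * taylor (-1) Φ - taylor (-1) b * (taylor (-1) Φ - (Φ - Ψ)) := by
  rw [wQ]; ring

theorem natDegree_theta_le {t σ : ℕ} (hΦd : Φ.natDegree = t) (hΨ : Ψ.natDegree ≤ σ + 1)
    (htσ : t ≤ σ + 2) : (taylor (-1) Φ - (Φ - Ψ)).natDegree ≤ σ + 1 := by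
  have : taylor (-1) Φ - (Φ - Ψ) = Ψ - (Φ - taylor (-1) Φ) := by ring
  rw [this]
  exact (natDegree_sub_le_of_le hΨ (natDegree_nabla_le hΦd.le)).trans (by omega)

theorem natDegree_wQ_le {t σ n : ℕ} (hΦd : Φ.natDegree = t) (hΨ : Ψ.natDegree ≤ σ + 1)
    (htσ : t ≤ σ + 2) {a b : ℂ[X]} (ha : a.natDegree + t ≤ n) (hb : b.degree < (n - σ : ℕ)) :
    (wQ Φ Ψ a b).natDegree ≤ n := by
  have hΦ' : (taylor (-1) Φ).natDegree ≤ t := by rw [natDegree_taylor, hΦd]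
  have h1 : (a * taylor (-1) Φ).natDegree ≤ n :=
    natDegree_mul_le.trans (by omega)
  have h2 : ((b - taylor (-1) b) * taylor (-1) Φ).natDegree ≤ n := by
    by_cases hb0 : b.natDegree = 0
    · rw [eq_C_of_natDegree_eq_zero hb0]; simp
    · have hb1 := (natDegree_lt_iff_degree_lt (by rintro rfl; simp at hb0)).mpr hb
      have := natDegree_nabla_le (le_refl b.natDegree)
      exact natDegree_mul_le.trans (by omega)
  have h3 : (taylor (-1) b * (taylor (-1) Φ - (Φ - Ψ))).natDegree ≤ n :=
    natDegree_mul_le_of_degree_lt (by rwa [degree_taylor])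
      (natDegree_theta_le hΦd hΨ htσ) (by omega)
  rw [wQ_eq]
  exact (natDegree_sub_le_of_le (natDegree_sub_le_of_le h1 h2) h3).trans (by simp)

/-- If `Q = 0`, the functional vanishes on multiples of `Φ(x-1)`, so by Euclidean division it is
determined by its values in degree at most `deg Φ`. -/
theorem wFun_eq_zero_of_wQ (hR : ∀ f, -u (Φ * Δd f) = u (Ψ * f)) (hΦ : Φ.Monic)
    {a b : ℂ[X]} (hQ : wQ Φ Ψ a b = 0)
    (h0 : ∀ f : ℂ[X], f.natDegree ≤ Φ.natDegree → wFun u a b f = 0) (f : ℂ[X]) :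
    wFun u a b f = 0 := by
  have hm : (taylor (-1) Φ).Monic := by rw [Monic, leadingCoeff_taylor]; exact hΦ
  have hd := degree_modByMonic_lt f hm
  have e := modByMonic_add_div f (taylor (-1) Φ)
  have hadd : ∀ f g, wFun u a b (f + g) = wFun u a b f + wFun u a b g := by
    intro f g
    rw [wFun, wFun, wFun, ← map_add, Δd_add]; congr 1; ring
  rw [← e, hadd, wFun_phi hR, hQ, zero_mul, map_zero, add_zero]
  apply h0
  rw [degree_taylor] at hd
  exact natDegree_le_natDegree hd.le

/-- A functional `a u - Δ(b u)` within the degree bounds of the `n`-th relation that kills all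
polynomials of degree at most `n + σ` is zero. With `Φ(x-1) v = Q u`, vanishing of `v` on
`(Φ(x-1) - Φ + Ψ) f` gives `u(Δ(Q f)) = 0`, which forces `ΔQ` to be orthogonal to every polynomial
of degree `< n`; so `Q` is constant, and finally zero. -/
theorem wFun_eq_zero (hu : IsSMOP u B) (hR : ∀ f, -u (Φ * Δd f) = u (Ψ * f)) {t σ n : ℕ}
    (hΦ : Φ.Monic) (hΦd : Φ.natDegree = t) (hΨ : Ψ.natDegree ≤ σ + 1) (htσ : t ≤ σ + 2)
    (htn : t + 1 ≤ n) {a b : ℂ[X]} (ha : a.natDegree + t ≤ n)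
    (hb : b.degree < (n - σ : ℕ))
    (h0 : ∀ f : ℂ[X], f.natDegree ≤ n + σ → wFun u a b f = 0) (f : ℂ[X]) :
    wFun u a b f = 0 := by
  set Q := wQ Φ Ψ a b with hQdef
  have hQd : Q.natDegree ≤ n := natDegree_wQ_le hΦd hΨ htσ ha hb
  have hQorth : ∀ f : ℂ[X], f.natDegree + t ≤ n + σ → u (Q * f) = 0 := by
    intro f hf
    rw [← wFun_phi hR]
    exact h0 _ (natDegree_mul_le.trans (by rw [natDegree_taylor]; omega))
  have hΔQ : ∀ f : ℂ[X], f.natDegree + 1 ≤ n → u (taylor 1 Q * taylor 1 f - Q * f) = 0 := by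
    intro f hf
    have h1 : wFun u a b ((taylor (-1) Φ - (Φ - Ψ)) * f) = 0 :=
      h0 _ (natDegree_mul_le.trans (by have := natDegree_theta_le hΦd hΨ htσ; omega))
    have h2 : wFun u a b ((taylor (-1) Φ - (Φ - Ψ)) * f) =
        wFun u a b (taylor (-1) Φ * f) - wFun u a b ((Φ - Ψ) * f) := by
      rw [wFun, wFun, wFun, ← map_sub, sub_mul, sub_eq_add_neg, Δd_add,
        ← neg_one_smul ℂ ((Φ - Ψ) * f), Δd_smul]
      congr 1
      simp only [neg_smul, one_smul]; ring
    rw [h2, wFun_phi hR, wFun_theta hR, ← hQdef, taylor_mul, ← map_sub] at h1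
    rw [← neg_eq_zero, ← map_neg, ← h1]
    congr 1; ring
  have hz : Δd Q = 0 := by
    apply eq_zero_of_orth hu
    intro k hk
    have hk' : k + 1 ≤ n := hk.trans (natDegree_Δd_le' hQd) |> fun h => by omega
    have h1 := hΔQ (taylor (-1) (B k)) (by rw [natDegree_taylor, hu.2.1]; exact hk')
    have h2 : u (Q * (B k - taylor (-1) (B k))) = 0 := by
      rcases Nat.eq_zero_or_pos k with rfl | hk0
      · have : (B 0 - taylor (-1) (B 0)) = 0 := by
          rw [eq_C_of_natDegree_eq_zero (hu.2.1 0)]; simp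
        simp [this]
      · apply hQorth
        have := natDegree_nabla_le (hu.2.1 k).le
        omega
    have e : B k * Δd Q = (taylor 1 Q * taylor 1 (taylor (-1) (B k))
        - Q * taylor (-1) (B k)) - Q * (B k - taylor (-1) (B k)) := by
      rw [taylor_back, Δd_eq]; ring
    rw [e, map_sub, h1, h2, sub_zero]
  have hQ0 : Q = 0 := by
    apply eq_zero_of_orth hu
    intro k hk
    rw [natDegree_eq_zero_of_Δd hz] at hk
    rw [mul_comm]
    exact hQorth _ (by rw [hu.2.1]; omega)
  refine wFun_eq_zero_of_wQ hR hΦ hQ0 (fun f hf => h0 f ?_) f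
  omega

/-- Finite-dimensional duality: if a functional `K` vanishes on every `F` of degree at most `N`
with `F ⊥ 1, …, x^(n₁-1)` and `ΔF ⊥ 1, …, x^(n₂-1)`, then on polynomials of degree at most `N` it
is of the form `a u - Δ(b u)` with `deg a < n₁`, `deg b < n₂`. -/
theorem exists_wFun_of_ker (u : ℂ[X] →ₗ[ℂ] ℂ) (K : ℂ[X] →ₗ[ℂ] ℂ) (N n₁ n₂ : ℕ)
    (h : ∀ F : ℂ[X], F.natDegree ≤ N → (∀ i < n₁, u (X ^ i * F) = 0) →
      (∀ i < n₂, u (X ^ i * Δd F) = 0) → K F = 0) :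
    ∃ a b : ℂ[X], a.degree < n₁ ∧ b.degree < n₂ ∧
      ∀ F : ℂ[X], F.natDegree ≤ N → K F = wFun u a b F := by
  let D : ℂ[X] →ₗ[ℂ] ℂ[X] := taylor 1 - LinearMap.id
  have hD : ∀ f, D f = Δd f := fun f => by rw [Δd_eq]; rfl
  let E := degreeLT ℂ (N + 1)
  let L : Fin n₁ ⊕ Fin n₂ → (E →ₗ[ℂ] ℂ) := Sum.elim
    (fun i => (u ∘ₗ LinearMap.mulLeft ℂ (X ^ (i : ℕ))) ∘ₗ E.subtype)
    (fun i => (u ∘ₗ LinearMap.mulLeft ℂ (X ^ (i : ℕ)) ∘ₗ D) ∘ₗ E.subtype)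
  have hE : ∀ F : ℂ[X], F ∈ E ↔ F.natDegree ≤ N := by
    intro F
    rw [mem_degreeLT]
    by_cases hF : F = 0
    · simp [hF]
    · rw [← natDegree_lt_iff_degree_lt hF]; omega
  have hker : ⨅ i, LinearMap.ker (L i) ≤ LinearMap.ker (K ∘ₗ E.subtype) := by
    intro F hF
    rw [Submodule.mem_iInf] at hF
    refine h F ((hE _).mp F.2) (fun i hi => ?_) (fun i hi => ?_)
    · exact hF (Sum.inl ⟨i, hi⟩)
    · have := hF (Sum.inr ⟨i, hi⟩)
      simpa [L, hD] using this
  have hspan := mem_span_of_iInf_ker_le_ker hker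
  have key : ∀ M ∈ Submodule.span ℂ (Set.range L), ∃ a b : ℂ[X], a.degree < n₁ ∧ b.degree < n₂ ∧
      ∀ F : E, M F = wFun u a b F := by
    intro M hM
    induction hM using Submodule.span_induction with
    | mem M hM =>
      obtain ⟨i | i, rfl⟩ := hM
      · refine ⟨X ^ (i : ℕ), 0, ?_, ?_, fun F => ?_⟩
        · rw [degree_X_pow]; exact_mod_cast i.2
        · rw [degree_zero]; exact WithBot.bot_lt_coe _
        · simp [L, wFun]
      · refine ⟨0, X ^ (i : ℕ), ?_, ?_, fun F => ?_⟩
        · rw [degree_zero]; exact WithBot.bot_lt_coe _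
        · rw [degree_X_pow]; exact_mod_cast i.2
        · simp [L, wFun, hD]
    | zero =>
      refine ⟨0, 0, ?_, ?_, fun F => by simp [wFun]⟩ <;>
      · rw [degree_zero]; exact WithBot.bot_lt_coe _
    | add M₁ M₂ _ _ h₁ h₂ =>
      obtain ⟨a₁, b₁, ha₁, hb₁, e₁⟩ := h₁
      obtain ⟨a₂, b₂, ha₂, hb₂, e₂⟩ := h₂
      refine ⟨a₁ + a₂, b₁ + b₂, (degree_add_le _ _).trans_lt (max_lt ha₁ ha₂),
        (degree_add_le _ _).trans_lt (max_lt hb₁ hb₂), fun F => ?_⟩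
      rw [LinearMap.add_apply, e₁, e₂, wFun, wFun, wFun, ← map_add]
      congr 1; ring
    | smul c M _ h =>
      obtain ⟨a, b, ha, hb, e⟩ := h
      refine ⟨c • a, c • b, (degree_smul_le _ _).trans_lt ha,
        (degree_smul_le _ _).trans_lt hb, fun F => ?_⟩
      rw [LinearMap.smul_apply, e, wFun, wFun, ← map_smul, smul_add, smul_mul_assoc,
        smul_mul_assoc]
  obtain ⟨a, b, ha, hb, e⟩ := key _ hspan
  exact ⟨a, b, ha, hb, fun F hF => e ⟨F, (hE F).mpr hF⟩⟩

theorem orth_of_monomials {u : ℂ[X] →ₗ[ℂ] ℂ} {G : ℂ[X]} {k : ℕ}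
    (h : ∀ i < k, u (X ^ i * G) = 0) {g : ℂ[X]} (hg : g.degree < k) : u (g * G) = 0 := by
  by_cases hg0 : g = 0
  · simp [hg0]
  rw [as_sum_range' g k ((natDegree_lt_iff_degree_lt hg0).mpr hg), Finset.sum_mul, map_sum]
  refine Finset.sum_eq_zero fun i hi => ?_
  rw [← C_mul_X_pow_eq_monomial, mul_assoc, ← smul_eq_C_mul, map_smul, h i (by simpa using hi),
    smul_zero]

theorem lead_pair (hu : IsSMOP u B) {G W : ℂ[X]} {k : ℕ}
    (h : ∀ g : ℂ[X], g.degree < k → u (g * G) = 0) (hW : W.natDegree ≤ k) :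
    u (W * G) = W.coeff k * u (B k * G) := by
  have h1 := h _ (degree_sub_lead hu (g := W) (k := k)
    (degree_le_natDegree.trans_lt (by exact_mod_cast (by omega))))
  rw [sub_mul, map_sub, smul_mul_assoc, map_smul, sub_eq_zero] at h1
  simpa using h1

/-- The polynomial whose normalized difference is the common value of the two sides of the
`n`-th relation, chosen so that its component along `B (n + 1 - t)` is nonzero. -/
theorem exists_relation_poly (hu : IsSMOP u B) (hR : ∀ f, -u (Φ * Δd f) = u (Ψ * f))
    {t σ n : ℕ} (hΦ : Φ.Monic) (hΦd : Φ.natDegree = t) (hΨ : Ψ.natDegree ≤ σ + 1)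
    (htσ : t ≤ σ + 2) (htn : t + 1 ≤ n) :
    ∃ F : ℂ[X], F.natDegree ≤ n + σ + 1 ∧ F.coeff (n + σ + 1) = 1 ∧
      (∀ g : ℂ[X], g.degree < (n + 1 - t : ℕ) → u (g * F) = 0) ∧
      (∀ g : ℂ[X], g.degree < (n - σ : ℕ) → u (g * Δd F) = 0) ∧
      u (B (n + 1 - t) * F) ≠ 0 := by
  -- Either functional below is nonzero somewhere on the admissible `F`, by duality.
  have h1 : ∃ F : ℂ[X], F.natDegree ≤ n + σ + 1 ∧ (∀ i < n + 1 - t, u (X ^ i * F) = 0) ∧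
      (∀ i < n - σ, u (X ^ i * Δd F) = 0) ∧ F.coeff (n + σ + 1) ≠ 0 := by
    by_contra! hcon
    obtain ⟨a, b, ha, hb, e⟩ := exists_wFun_of_ker u (lcoeff ℂ (n + σ + 1)) (n + σ + 1) _ _ hcon
    have ha' : a.natDegree + t ≤ n := by
      by_cases ha0 : a = 0
      · simp [ha0]; omega
      · have := (natDegree_lt_iff_degree_lt ha0).mpr ha; omega
    have h0 := wFun_eq_zero hu hR hΦ hΦd hΨ htσ htn ha' hb
      (fun f hf => by
        rw [← e f (by omega), lcoeff_apply, coeff_eq_zero_of_natDegree_lt (by omega)])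
      (X ^ (n + σ + 1))
    rw [← e _ (by rw [natDegree_X_pow])] at h0
    simp at h0
  have h2 : ∃ F : ℂ[X], F.natDegree ≤ n + σ + 1 ∧ (∀ i < n + 1 - t, u (X ^ i * F) = 0) ∧
      (∀ i < n - σ, u (X ^ i * Δd F) = 0) ∧ u (B (n + 1 - t) * F) ≠ 0 := by
    by_contra! hcon
    obtain ⟨a, b, ha, hb, e⟩ := exists_wFun_of_ker u
      (u ∘ₗ LinearMap.mulLeft ℂ (B (n + 1 - t))) (n + σ + 1) _ _ hcon
    have hB : (B (n + 1 - t)).degree = (n + 1 - t : ℕ) := by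
      rw [degree_eq_natDegree (hu.1 _).ne_zero, hu.2.1]
    have hda : (B (n + 1 - t) - a).degree = (n + 1 - t : ℕ) := by
      rw [degree_sub_eq_left_of_degree_lt (by rwa [hB]), hB]
    have hnda := natDegree_eq_of_degree_eq_some hda
    have hb' : (-b).degree < (n - σ : ℕ) := by rwa [degree_neg]
    -- `B (n + 1 - t) u = a u - Δ(b u)` on low degrees, hence identically.
    have h0 := wFun_eq_zero hu hR (n := n + 1) hΦ hΦd hΨ htσ (by omega)
      (a := B (n + 1 - t) - a) (b := -b) (by omega)
      (hb'.trans_le (by exact_mod_cast (by omega)))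
      (fun f hf => by
        have := e f (by omega)
        rw [wFun] at this ⊢
        rw [sub_mul, neg_mul, sub_add_eq_add_sub, ← sub_eq_add_neg, sub_right_comm, sub_sub,
          map_sub, ← this]
        simp)
    have hQ : wQ Φ Ψ (B (n + 1 - t) - a) (-b) = 0 := by
      apply eq_zero_of_orth hu
      intro k _
      rw [mul_comm, ← wFun_phi hR]
      exact h0 _
    -- The first summand of the density has degree `n + 1`, the rest has degree at most `n`.
    have hsplit : (B (n + 1 - t) - a) * taylor (-1) Φ = -wQ Φ Ψ 0 (-b) := by
      rw [wQ] at hQ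
      rw [wQ, eq_neg_iff_add_eq_zero]
      refine Eq.trans ?_ hQ
      ring
    have hle : (wQ Φ Ψ 0 (-b)).natDegree ≤ n :=
      natDegree_wQ_le hΦd hΨ htσ (by simp; omega) hb'
    have hdeg := congrArg natDegree hsplit
    rw [natDegree_neg, natDegree_mul, hnda, natDegree_taylor, hΦd] at hdeg
    · omega
    · intro h; rw [h, degree_zero] at hda; exact absurd hda (by simp)
    · intro h
      rw [← leadingCoeff_eq_zero, leadingCoeff_taylor, hΦ.leadingCoeff] at h
      exact one_ne_zero h
  -- A subspace is not the union of two proper subspaces.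
  have h3 : ∃ F : ℂ[X], F.natDegree ≤ n + σ + 1 ∧ (∀ i < n + 1 - t, u (X ^ i * F) = 0) ∧
      (∀ i < n - σ, u (X ^ i * Δd F) = 0) ∧ F.coeff (n + σ + 1) ≠ 0 ∧
      u (B (n + 1 - t) * F) ≠ 0 := by
    obtain ⟨F, hF1, hF2, hF3, hF4⟩ := h1
    obtain ⟨G, hG1, hG2, hG3, hG4⟩ := h2
    by_cases hF5 : u (B (n + 1 - t) * F) = 0
    · by_cases hG5 : G.coeff (n + σ + 1) = 0
      · refine ⟨F + G, (natDegree_add_le_of_le hF1 hG1).trans (by simp), fun i hi => ?_,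
          fun i hi => ?_, ?_, ?_⟩
        · rw [mul_add, map_add, hF2 i hi, hG2 i hi, add_zero]
        · rw [Δd_add, mul_add, map_add, hF3 i hi, hG3 i hi, add_zero]
        · rwa [coeff_add, hG5, add_zero]
        · rwa [mul_add, map_add, hF5, zero_add]
      · exact ⟨G, hG1, hG2, hG3, hG5, hG4⟩
    · exact ⟨F, hF1, hF2, hF3, hF4, hF5⟩
  obtain ⟨F, hF1, hF2, hF3, hF4, hF5⟩ := h3
  refine ⟨(F.coeff (n + σ + 1))⁻¹ • F, (natDegree_smul_le _ _).trans hF1, ?_, fun g hg => ?_,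
    fun g hg => ?_, ?_⟩
  · rw [coeff_smul, smul_eq_mul, inv_mul_cancel₀ hF4]
  · rw [mul_smul_comm, map_smul, orth_of_monomials hF2 hg, smul_zero]
  · rw [Δd_smul, mul_smul_comm, map_smul, orth_of_monomials hF3 hg, smul_zero]
  · rw [mul_smul_comm, map_smul]
    exact smul_ne_zero (inv_ne_zero hF4) hF5

/-- Leibniz rule for `Δ(Φu) = Ψu`. -/
theorem pearson_leibniz (hR : ∀ f, -u (Φ * Δd f) = u (Ψ * f)) (F g : ℂ[X]) :
    u (Φ * g * Δd F) = -u ((Ψ * taylor (-1) g + Φ * Δd (taylor (-1) g)) * F) := by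
  have h := hR (F * taylor (-1) g)
  have e : Φ * Δd (F * taylor (-1) g) = Φ * g * Δd F + Φ * Δd (taylor (-1) g) * F := by
    rw [Δd_mul, taylor_back]; ring
  have e2 : (Ψ * taylor (-1) g + Φ * Δd (taylor (-1) g)) * F =
      Ψ * (F * taylor (-1) g) + Φ * Δd (taylor (-1) g) * F := by ring
  rw [e, map_add] at h
  rw [e2, map_add, ← h]; ring

/-- If the lowest coefficient on the right-hand side of the `r`-th relation is nonzero, then so is
the one on the left-hand side. By the Leibniz rule the two differ by the factor
`Ψ.coeff (σ + 1) + (r - σ - t) * Φ.coeff (σ + 2)` up to sign, and admissibility is what keeps this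
factor from vanishing. -/
theorem low_coeff_ne_zero (hu : IsSMOP u B) (hR : ∀ f, -u (Φ * Δd f) = u (Ψ * f))
    {t p σ r : ℕ} (hΦ : Φ.Monic) (hΨ : AdmissibleD Φ Ψ t p) (hσ : σ = max (t - 2) (p - 1))
    (hr : σ + t + 1 ≤ r) {F : ℂ[X]}
    (hF : ∀ g : ℂ[X], g.degree < (r + 1 - t : ℕ) → u (g * F) = 0)
    (hΔF : ∀ g : ℂ[X], g.degree < (r - σ : ℕ) → u (g * Δd F) = 0)
    (hne : u (B (r + 1 - t) * F) ≠ 0) : u (B (r - σ) * Δd F) ≠ 0 := by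
  obtain ⟨-, hΦd, hΨd, hp, hadm⟩ := hΨ
  obtain ⟨d, rfl⟩ : ∃ d, r = σ + t + (d + 1) := ⟨r - (σ + t + 1), by omega⟩
  set g := B (d + 1) with hg
  have hgd : g.natDegree = d + 1 := hu.2.1 _
  have hm : (Φ * g).Monic := hΦ.mul (hu.1 _)
  have hmd : (Φ * g).natDegree = σ + t + (d + 1) - σ := by
    rw [hΦ.natDegree_mul (hu.1 _), hΦd, hgd]; omega
  have h1 := lead_pair hu hΔF hmd.le
  rw [← hmd, coeff_natDegree, hm.leadingCoeff, one_mul, hmd] at h1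
  rw [← h1, pearson_leibniz hR]
  have hg' : (taylor (-1) g).natDegree = d + 1 := by rw [natDegree_taylor, hgd]
  have hgc : (taylor (-1) g).coeff (d + 1) = 1 := by
    rw [← hg', coeff_natDegree, leadingCoeff_taylor, hu.1]
  have hΔg := natDegree_Δd_le hg'.le
  have hk : σ + t + (d + 1) + 1 - t = (σ + 1) + (d + 1) := by omega
  have hk' : (σ + 1) + (d + 1) = (σ + 2) + d := by omega
  have hΨ1 : Ψ.natDegree ≤ σ + 1 := by omega
  have hΦ1 : Φ.natDegree ≤ σ + 2 := by omega
  have hWd : (Ψ * taylor (-1) g + Φ * Δd (taylor (-1) g)).natDegree ≤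
      σ + t + (d + 1) + 1 - t := by
    refine (natDegree_add_le_of_le (natDegree_mul_le_of_le hΨ1 hg'.le)
      (natDegree_mul_le_of_le hΦ1 hΔg)).trans ?_
    omega
  rw [lead_pair hu hF hWd]
  refine neg_ne_zero.mpr (mul_ne_zero ?_ hne)
  rw [hk, coeff_add, coeff_mul_add_eq_of_natDegree_le hΨ1 hg'.le, hk',
    coeff_mul_add_eq_of_natDegree_le hΦ1 hΔg, coeff_Δd hg'.le, hgc, mul_one, mul_one]
  have hΨlc : Ψ.coeff p = Ψ.leadingCoeff := by rw [← hΨd]; rfl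
  have hΨ0 : Ψ.leadingCoeff ≠ 0 := by
    rw [Ne, leadingCoeff_eq_zero]; rintro rfl; simp at hΨd; omega
  have hΦlc : Φ.coeff t = 1 := by rw [← hΦd]; exact hΦ
  by_cases hpσ : p = σ + 1
  · rw [← hpσ, hΨlc]
    by_cases ht : t = σ + 2
    · rw [← ht, hΦlc, one_mul]
      intro h
      exact hadm (by omega) (d + 1) (by omega) (by push_cast; linear_combination h)
    · rw [coeff_eq_zero_of_natDegree_lt (by omega : Φ.natDegree < σ + 2), zero_mul, add_zero]
      exact hΨ0
  · have ht : t = σ + 2 := by omega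
    rw [← ht, hΦlc, one_mul, coeff_eq_zero_of_natDegree_lt (by omega), zero_add]
    exact_mod_cast Nat.succ_ne_zero d

end Semiclassical

/-! ### The equivalence -/

theorem B1d_eq (B : ℕ → ℂ[X]) (n : ℕ) : B1d B n = ((n : ℂ) + 1)⁻¹ • Δd (B (n + 1)) := by
  rw [B1d, smul_eq_C_mul]

/-- The `n`-th relation, obtained by expanding `ΔF / (n + σ + 1)` in the `B ν` on the left and `F`
itself in the `B (ν + 1)` on the right; the orthogonality hypotheses on `F` and `ΔF` are what
truncates the two sums. -/
theorem relation_of_poly {u : ℂ[X] →ₗ[ℂ] ℂ} {B : ℕ → ℂ[X]} (hu : IsSMOP u B) {t σ n : ℕ}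
    (htn : t + 1 ≤ n) (hσn : σ ≤ n) {F : ℂ[X]} (hFd : F.natDegree ≤ n + σ + 1)
    (hF : ∀ g : ℂ[X], g.degree < (n + 1 - t : ℕ) → u (g * F) = 0)
    (hΔF : ∀ g : ℂ[X], g.degree < (n - σ : ℕ) → u (g * Δd F) = 0) :
    ∑ ν ∈ Finset.Icc (n - σ) (n + σ),
        (((n + σ : ℕ) + 1 : ℂ)⁻¹ * (u (B ν * Δd F) / u (B ν ^ 2))) • B ν =
      ∑ ν ∈ Finset.Icc (n - t) (n + σ), (((n + σ : ℕ) + 1 : ℂ)⁻¹ * ((ν : ℂ) + 1) *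
        (u (B (ν + 1) * F) / u (B (ν + 1) ^ 2))) • B1d B ν := by
  have hBdeg : ∀ k, (B k).degree = k := fun k => by
    rw [degree_eq_natDegree (hu.1 _).ne_zero, hu.2.1]
  have hL : Δd F = ∑ ν ∈ Finset.Icc (n - σ) (n + σ), (u (B ν * Δd F) / u (B ν ^ 2)) • B ν := by
    conv_lhs => rw [expand hu (natDegree_Δd_le (d := n + σ) hFd)]
    symm
    apply Finset.sum_subset
    · intro k hk; simp only [Finset.mem_Icc, Finset.mem_range] at hk ⊢; omega
    · intro k hk hk'
      simp only [Finset.mem_Icc, Finset.mem_range] at hk hk'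
      rw [hΔF _ (by rw [hBdeg]; exact_mod_cast (by omega)), zero_div, zero_smul]
  have hR : Δd F = ∑ ν ∈ Finset.Icc (n - t) (n + σ),
      (u (B (ν + 1) * F) / u (B (ν + 1) ^ 2)) • Δd (B (ν + 1)) := by
    conv_lhs => rw [expand hu hFd]
    rw [Finset.sum_range_succ', Δd_add, Δd_sum, Δd_smul, Δd_eq_zero (hu.2.1 0).le, smul_zero,
      add_zero]
    simp only [Δd_smul]
    symm
    apply Finset.sum_subset
    · intro k hk; simp only [Finset.mem_Icc, Finset.mem_range] at hk ⊢; omega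
    · intro k hk hk'
      simp only [Finset.mem_Icc, Finset.mem_range] at hk hk'
      rw [hF _ (by rw [hBdeg]; exact_mod_cast (by omega)), zero_div, zero_smul]
  have e : ∀ ν : ℕ, (((n + σ : ℕ) + 1 : ℂ)⁻¹ * ((ν : ℂ) + 1) *
        (u (B (ν + 1) * F) / u (B (ν + 1) ^ 2))) • B1d B ν =
      ((n + σ : ℕ) + 1 : ℂ)⁻¹ •
        (u (B (ν + 1) * F) / u (B (ν + 1) ^ 2)) • Δd (B (ν + 1)) := by
    intro ν
    have hν : (ν : ℂ) + 1 ≠ 0 := by exact_mod_cast Nat.succ_ne_zero ν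
    rw [B1d_eq, smul_smul, smul_smul]
    congr 1
    field_simp
  simp only [e, mul_smul]
  rw [← Finset.smul_sum, ← Finset.smul_sum, ← hL, ← hR]

/-- The relations imply the Pearson equation. The polynomial `Ψ` is the one that makes both sides
agree on `B 0, …, B p`; since its degree is `p`, both sides also vanish on
`B (p + 1), …, B (2σ + t + 1)`, and the relation of index `m - σ - 1` propagates the equality to
`B m` for all larger `m`. -/
theorem forward {Φ : ℂ[X]} {t : ℕ} (hΦ : Φ.Monic) (hΦd : Φ.natDegree = t)
    {u : ℂ[X] →ₗ[ℂ] ℂ} {B : ℕ → ℂ[X]} (hu : IsSMOP u B) {σ p : ℕ} (hp : 1 ≤ p)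
    (hσ : σ = max (t - 2) (p - 1)) {ξ ς : ℕ → ℕ → ℂ}
    (hrel : ∀ n, max σ (t + 1) ≤ n →
      ∑ ν ∈ Finset.Icc (n - σ) (n + σ), ξ n ν • B ν =
        ∑ ν ∈ Finset.Icc (n - t) (n + σ), ς n ν • B1d B ν)
    (hone : ∀ n, max σ (t + 1) ≤ n → ς n (n + σ) = 1)
    (hzero : ∀ m, p + 1 ≤ m → m ≤ 2 * σ + t + 1 → -u (Φ * Δd (B m)) = 0)
    (hpne : -u (Φ * Δd (B p)) ≠ 0)
    (hadm : p + 1 = t → ∀ m : ℕ, 1 ≤ m →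
        (u (B p ^ 2))⁻¹ * u (Φ * Δd (B p)) ≠ (m : ℂ)) :
    ∃ Ψ : ℂ[X], AdmissibleD Φ Ψ t p ∧ ∀ f : ℂ[X], -u (Φ * Δd f) = u (Ψ * f) := by
  set c : ℕ → ℂ := fun m => -u (Φ * Δd (B m)) / u (B m ^ 2) with hc
  set Ψ : ℂ[X] := ∑ m ∈ Finset.range (p + 1), c m • B m with hΨ
  have hΨle : Ψ.natDegree ≤ p := natDegree_sum_le' hu _ _ fun i hi => by simp at hi; omega
  have hΨB : ∀ m, u (Ψ * B m) = if m ∈ Finset.range (p + 1) then c m * u (B m ^ 2) else 0 := by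
    intro m; rw [mul_comm, hΨ, pair_sum hu]
  have hΨp : Ψ.coeff p = c p := by
    have h1 := pair_coeff hu hΨle
    rw [mul_comm, hΨB, if_pos (by simp)] at h1
    exact (mul_right_cancel₀ (hu.2.2.2 p) h1).symm
  have hcp : c p ≠ 0 := div_ne_zero hpne (hu.2.2.2 p)
  have hΨd : Ψ.natDegree = p := natDegree_eq_of_le_of_coeff_ne_zero hΨle (by rwa [hΨp])
  have hB : ∀ m, -u (Φ * Δd (B m)) = u (Ψ * B m) := by
    intro m
    induction m using Nat.strong_induction_on with
    | _ m ih =>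
    by_cases hm : m ≤ 2 * σ + t + 1
    · rw [hΨB]
      split_ifs with h
      · rw [hc, div_mul_cancel₀ _ (hu.2.2.2 m)]
      · exact hzero m (by simpa using h) hm
    · -- The relation of index `n` provides a polynomial of degree `m` on which both
      -- functionals vanish.
      obtain ⟨n, rfl⟩ : ∃ n, m = n + σ + 1 := ⟨m - σ - 1, by omega⟩
      have hn : max σ (t + 1) ≤ n := by omega
      have hN : ((n + σ : ℕ) : ℂ) + 1 ≠ 0 := by exact_mod_cast Nat.succ_ne_zero (n + σ)
      have h1 : ∑ ν ∈ Finset.Icc (n - t) (n + σ),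
          (ς n ν * ((ν : ℂ) + 1)⁻¹) * u (Φ * Δd (B (ν + 1))) = 0 := by
        have h2 := congrArg (fun f => u (Φ * f)) (hrel n hn)
        simp only [Finset.mul_sum, map_sum, B1d_eq, mul_smul_comm, map_smul, smul_eq_mul] at h2
        simp only [mul_assoc]
        rw [← h2]
        refine Finset.sum_eq_zero fun ν hν => ?_
        rw [Finset.mem_Icc] at hν
        rw [mul_comm Φ, orth_of_natDegree_lt hu (by omega), mul_zero]
      have h3 : ∀ ν ∈ Finset.Icc (n - t) (n + σ), u (Ψ * B (ν + 1)) = 0 := by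
        intro ν hν
        rw [Finset.mem_Icc] at hν
        rw [mul_comm, orth_of_natDegree_lt hu (by omega)]
      have hmem : n + σ ∈ Finset.Icc (n - t) (n + σ) := Finset.mem_Icc.mpr ⟨by omega, le_rfl⟩
      have hlow : ∀ ν ∈ Finset.Icc (n - t) (n + σ), ν ≠ n + σ →
          (ς n ν * ((ν : ℂ) + 1)⁻¹) * u (Φ * Δd (B (ν + 1))) = 0 := by
        intro ν hν hne
        have h4 := ih (ν + 1) (by rw [Finset.mem_Icc] at hν; omega)
        rw [h3 ν hν, neg_eq_zero] at h4
        rw [h4, mul_zero]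
      rw [Finset.sum_eq_single_of_mem (n + σ) hmem hlow, hone n hn, one_mul] at h1
      rw [h3 (n + σ) hmem, (mul_eq_zero.mp h1).resolve_left (inv_ne_zero hN), neg_zero]
  refine ⟨Ψ, ⟨hΦ, hΦd, hΨd, hp, fun hpt m hm h => hadm hpt m hm ?_⟩, fun f => ?_⟩
  · rw [leadingCoeff, hΨd, hΨp, hc] at h
    rw [← neg_inj, ← h]
    ring
  · rw [expand hu (le_refl f.natDegree), Δd_sum]
    simp only [Δd_smul, Finset.mul_sum, map_sum, mul_smul_comm, map_smul]
    rw [← Finset.sum_neg_distrib]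
    refine Finset.sum_congr rfl fun k _ => ?_
    rw [← hB, smul_neg]

/-- Theorem: second characterization of discrete (Δ-)semiclassical polynomials. -/
theorem statement14
    (Φ : ℂ[X]) (t : ℕ) (hΦ : Φ.Monic) (hΦd : Φ.natDegree = t)
    (u : ℂ[X] →ₗ[ℂ] ℂ) (B : ℕ → ℂ[X]) (hu : IsSMOP u B) :
    (∃ (σ p r : ℕ), 1 ≤ p ∧ σ + t + 1 ≤ r ∧ σ = max (t - 2) (p - 1) ∧
      (∃ ξ ς : ℕ → ℕ → ℂ,
        (∀ n, max σ (t + 1) ≤ n →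
          ∑ ν ∈ Finset.Icc (n - σ) (n + σ), ξ n ν • B ν =
            ∑ ν ∈ Finset.Icc (n - t) (n + σ), ς n ν • B1d B ν) ∧
        (∀ n, max σ (t + 1) ≤ n → ξ n (n + σ) = 1 ∧ ς n (n + σ) = 1) ∧
        ξ r (r - σ) * ς r (r - t) ≠ 0) ∧
      (∀ m, p + 1 ≤ m → m ≤ 2 * σ + t + 1 → -u (Φ * Δd (B m)) = 0) ∧
      -u (Φ * Δd (B p)) ≠ 0 ∧
      (p + 1 = t → ∀ m : ℕ, 1 ≤ m →
        (u (B p ^ 2))⁻¹ * u (Φ * Δd (B p)) ≠ (m : ℂ))) ↔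
    (∃ (Ψ : ℂ[X]) (p : ℕ), Ψ.natDegree = p ∧ 1 ≤ p ∧ AdmissibleD Φ Ψ t p ∧
      ∀ f : ℂ[X], -u (Φ * Δd f) = u (Ψ * f)) := by
  constructor
  · rintro ⟨σ, p, r, hp, -, hσ, ⟨ξ, ς, hrel, hone, -⟩, hzero, hpne, hadm⟩
    obtain ⟨Ψ, hA, hR⟩ := forward hΦ hΦd hu hp hσ hrel (fun n hn => (hone n hn).2) hzero hpne hadm
    exact ⟨Ψ, p, hA.2.2.1, hp, hA, hR⟩
  · rintro ⟨Ψ, p, hΨd, hp, hA, hR⟩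
    obtain ⟨σ, hσ⟩ : ∃ σ, σ = max (t - 2) (p - 1) := ⟨_, rfl⟩
    have hex : ∀ n : ℕ, ∃ F : ℂ[X], max σ (t + 1) ≤ n →
        F.natDegree ≤ n + σ + 1 ∧ F.coeff (n + σ + 1) = 1 ∧
        (∀ g : ℂ[X], g.degree < (n + 1 - t : ℕ) → u (g * F) = 0) ∧
        (∀ g : ℂ[X], g.degree < (n - σ : ℕ) → u (g * Δd F) = 0) ∧
        u (B (n + 1 - t) * F) ≠ 0 := by
      intro n
      by_cases hn : max σ (t + 1) ≤ n
      · obtain ⟨F, hF⟩ := exists_relation_poly hu hR (n := n) (σ := σ) hΦ hΦd (by omega) (by omega)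
          (by omega)
        exact ⟨F, fun _ => hF⟩
      · exact ⟨0, fun h => absurd h hn⟩
    choose F hF using hex
    have hN : ∀ k : ℕ, (k : ℂ) + 1 ≠ 0 := fun k => by exact_mod_cast Nat.succ_ne_zero k
    have hp1 : -u (Φ * Δd (B p)) = Ψ.leadingCoeff * u (B p ^ 2) := by
      rw [hR, mul_comm, pair_coeff hu hΨd.le, leadingCoeff, hΨd]
    have hΨ0 : Ψ.leadingCoeff ≠ 0 := by
      rw [Ne, leadingCoeff_eq_zero]; rintro rfl; simp at hΨd; omega
    refine ⟨σ, p, σ + t + 1, hp, le_rfl, hσ, ⟨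
      fun n ν => ((n + σ : ℕ) + 1 : ℂ)⁻¹ * (u (B ν * Δd (F n)) / u (B ν ^ 2)),
      fun n ν => ((n + σ : ℕ) + 1 : ℂ)⁻¹ * ((ν : ℂ) + 1) *
        (u (B (ν + 1) * F n) / u (B (ν + 1) ^ 2)), ?_, ?_, ?_⟩, ?_, ?_, ?_⟩
    · intro n hn
      obtain ⟨h1, -, h3, h4, -⟩ := hF n hn
      exact relation_of_poly hu (by omega) (by omega) h1 h3 h4
    · intro n hn
      obtain ⟨h1, h2, -, -, -⟩ := hF n hn
      have hn0 := hN (n + σ)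
      refine ⟨?_, ?_⟩
      · dsimp only
        rw [pair_coeff hu (natDegree_Δd_le (d := n + σ) h1), coeff_Δd h1, h2, mul_one,
          mul_div_cancel_right₀ _ (hu.2.2.2 _), inv_mul_cancel₀ hn0]
      · dsimp only
        rw [pair_coeff hu h1, h2, one_mul, div_self (hu.2.2.2 _), mul_one, inv_mul_cancel₀ hn0]
    · obtain ⟨-, -, h3, h4, h5⟩ := hF (σ + t + 1) (by omega)
      have h6 := low_coeff_ne_zero hu hR hΦ hA hσ le_rfl h3 h4 h5
      have e : σ + t + 1 - t + 1 = σ + t + 1 + 1 - t := by omega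
      dsimp only
      rw [e]
      exact mul_ne_zero (mul_ne_zero (inv_ne_zero (hN _)) (div_ne_zero h6 (hu.2.2.2 _)))
        (mul_ne_zero (mul_ne_zero (inv_ne_zero (hN _)) (hN _)) (div_ne_zero h5 (hu.2.2.2 _)))
    · intro m hm _
      rw [hR, mul_comm, orth_of_natDegree_lt hu (by omega)]
    · rw [hp1]
      exact mul_ne_zero hΨ0 (hu.2.2.2 p)
    · intro hpt m hm h
      refine hA.2.2.2.2 hpt m hm ?_
      have h0 := hu.2.2.2 p
      have h7 : u (Φ * Δd (B p)) = -(Ψ.leadingCoeff * u (B p ^ 2)) := by rw [← hp1, neg_neg]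
      rw [← h, h7]
      field_simp
end
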